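/- Let k be a field, A an integral domain over k with a 𝔾ₐ-coaction β, b(t) a nonzero additive polynomial, and (g,h) a b(t)-pair with h ≠ 0. Define a k-algebra homomorphism ψ : A_h[s] → A_h[s][t] by letting ψ agree with β_h on A_h and setting ψ(s) = s − t. Then ψ is a 𝔾ₐ-coaction on A_h[s], and the element b(s) + g/h is ψ-invariant: ψ(b(s) + g/h) is the constant polynomial b(s) + g/h. -/

import Mathlib

open Polynomial

/-- Substitute `t ↦ t₁ + t₂` into a polynomial, landing in `R[t₁][t₂]`
(inner variable `t₁`, outer variable `t₂`). -/
noncomputable def coaddSubst {R : Type*} [CommSemiring R] (p : Polynomial R) :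
    Polynomial (Polynomial R) :=
  p.eval₂ ((Polynomial.C : Polynomial R →+* Polynomial (Polynomial R)).comp
      (Polynomial.C : R →+* Polynomial R))
    (Polynomial.C Polynomial.X + Polynomial.X)

/-- A 𝔾ₐ-coaction on a commutative `k`-algebra `A`: a `k`-algebra homomorphism
`β : A → A[t]` satisfying the counit and coassociativity axioms. -/
def IsGaCoaction {k A : Type*} [CommSemiring k] [CommSemiring A] [Algebra k A]
    (β : A →ₐ[k] Polynomial A) : Prop :=
  (∀ a : A, (β a).eval 0 = a) ∧
  (∀ a : A, coaddSubst (β a) = (β a).map β.toRingHom)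

/-- `c(t) ∈ k[t]` is additive: `c(t₁+t₂) = c(t₁) + c(t₂)` in `k[t₁][t₂]`. -/
def IsAdditivePoly {k : Type*} [CommSemiring k] (c : Polynomial k) : Prop :=
  coaddSubst c = Polynomial.C c + c.map (Polynomial.C : k →+* Polynomial k)

/-!
A ring homomorphism out of `A_h[s]` is determined on `A_h` and on `s`, so the coaction axioms for
`ψ` need only be checked there: on `A_h` they are those of `β_h`, and on `s` they say that `-t` is
additive. Dividing `β(g) = g + b(t) h` by the invariant `h` gives `β_h(g/h) = g/h + b(t)`, whose
last term cancels against the one in `b(s - t) = b(s) - b(t)`.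
-/

theorem aeval_C_eq_C_aeval {k R : Type*} [CommSemiring k] [Semiring R] [Algebra k R]
    (x : R) (p : k[X]) : aeval (C x) p = C (aeval x p) :=
  aeval_algHom_apply CAlgHom x p

theorem map_aeval_X {k R T : Type*} [CommSemiring k] [CommSemiring R] [Algebra k R]
    [CommSemiring T] [Algebra k T] (f : R →ₐ[k] T) (p : k[X]) :
    (aeval (X : R[X]) p).map f.toRingHom = aeval (X : T[X]) p := by
  rw [aeval_X_left_eq_map, map_map, aeval_X_left_eq_map, AlgHom.toRingHom_eq_coe,
    AlgHom.comp_algebraMap]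

theorem coaddSubst_eq_aeval {R : Type*} [CommSemiring R] (p : R[X]) :
    coaddSubst p = aeval (C X + X : R[X][X]) p :=
  rfl

theorem coaddSubst_C {R : Type*} [CommSemiring R] (a : R) :
    coaddSubst (C a) = C (C a) :=
  eval₂_C _ _

theorem coaddSubst_add {R : Type*} [CommSemiring R] (p q : R[X]) :
    coaddSubst (p + q) = coaddSubst p + coaddSubst q :=
  eval₂_add _ _

theorem coaddSubst_map {R T : Type*} [CommSemiring R] [CommSemiring T] (f : R →+* T)
    (p : R[X]) : coaddSubst (p.map f) = (coaddSubst p).map (mapRingHom f) := by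
  induction p using Polynomial.induction_on' with
  | add p q hp hq => simp only [Polynomial.map_add, coaddSubst_add, hp, hq]
  | monomial n a => simp [coaddSubst_eq_aeval, aeval_monomial]

theorem coaddSubst_aeval_X {k R : Type*} [CommSemiring k] [CommSemiring R] [Algebra k R]
    (p : k[X]) : coaddSubst (aeval (X : R[X]) p) = aeval (C X + X : R[X][X]) p := by
  rw [coaddSubst_eq_aeval, aeval_X_left_eq_map, aeval_map_algebraMap]

namespace IsAdditivePoly

variable {k : Type*} [CommSemiring k] {c : k[X]}

theorem aeval_add {R : Type*} [CommSemiring R] [Algebra k R] (hc : IsAdditivePoly c) (x y : R) :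
    aeval (x + y) c = aeval x c + aeval y c := by
  let evalAt : k[X][X] →ₐ[k] R := eval₂AlgHom (aeval x) y fun _ ↦ Commute.all _ _
  have evalAt_C (p : k[X]) : evalAt (C p) = aeval x p := eval₂_C _ _
  have evalAt_X : evalAt X = y := eval₂_X _ _
  have evalAt_sum : evalAt (aeval (C X + X) c) = aeval (x + y) c := by
    rw [← aeval_algHom_apply, map_add, evalAt_C, evalAt_X, aeval_X]
  have evalAt_outer : evalAt (aeval X c) = aeval y c := by
    rw [← aeval_algHom_apply, evalAt_X]
  rw [← evalAt_sum, ← evalAt_outer, ← evalAt_C, ← map_add]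
  exact congrArg evalAt hc

variable {R : Type*} [CommRing R] [Algebra k R]

theorem aeval_zero (hc : IsAdditivePoly c) : aeval (0 : R) c = 0 := by
  simpa using hc.aeval_add (0 : R) 0

theorem aeval_neg (hc : IsAdditivePoly c) (x : R) : aeval (-x) c = -aeval x c := by
  rw [eq_neg_iff_add_eq_zero, ← hc.aeval_add, neg_add_cancel, hc.aeval_zero]

end IsAdditivePoly

theorem isAdditivePoly_neg_X {k : Type*} [CommRing k] : IsAdditivePoly (-X : k[X]) := by
  simp [IsAdditivePoly, coaddSubst_eq_aeval, add_comm]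

theorem isGaCoaction_of_C_of_X {k A : Type*} [CommSemiring k] [CommSemiring A] [Algebra k A]
    {ψ : A[X] →ₐ[k] A[X][X]}
    (counit_C : ∀ a, (ψ (C a)).eval 0 = C a) (counit_X : (ψ X).eval 0 = X)
    (coassoc_C : ∀ a, coaddSubst (ψ (C a)) = (ψ (C a)).map ψ.toRingHom)
    (coassoc_X : coaddSubst (ψ X) = (ψ X).map ψ.toRingHom) : IsGaCoaction ψ := by
  have counit : (evalRingHom 0).comp ψ.toRingHom = RingHom.id _ :=
    ringHom_ext counit_C counit_X
  have coassoc : (aeval (C X + X)).toRingHom.comp ψ.toRingHom =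
      (mapRingHom ψ.toRingHom).comp ψ.toRingHom :=
    ringHom_ext coassoc_C coassoc_X
  exact ⟨RingHom.congr_fun counit, RingHom.congr_fun coassoc⟩

/-- The extension `A[s] → A[s][t]` of `β : A → A[t]` that sends `s` to `s + c(t)`. When `β` is a
coaction and `c` is additive, it is the diagonal coaction for the translation action of `𝔾ₐ`
through `c` on the line with coordinate `s`, which is the inner variable. -/
noncomputable def translationExtension {k A : Type*} [CommSemiring k] [CommSemiring A]
    [Algebra k A] (β : A →ₐ[k] A[X]) (c : k[X]) : A[X] →ₐ[k] A[X][X] :=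
  eval₂AlgHom ((mapAlgHom CAlgHom).comp β) (C X + aeval X c) fun _ ↦ Commute.all _ _

namespace translationExtension

section CommSemiring

variable {k A : Type*} [CommSemiring k] [CommSemiring A] [Algebra k A]
  (β : A →ₐ[k] A[X]) (c : k[X])

@[simp]
theorem apply_C (a : A) : translationExtension β c (C a) = (β a).map C :=
  eval₂_C _ _

@[simp]
theorem apply_X : translationExtension β c X = C X + aeval X c :=
  eval₂_X _ _

variable {β c}

theorem eq_of_apply_C_of_apply_X {ψ : A[X] →ₐ[k] A[X][X]}
    (hC : ∀ a, ψ (C a) = (β a).map C) (hX : ψ X = C X + aeval X c) :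
    ψ = translationExtension β c :=
  algHom_ext' (AlgHom.ext fun a ↦ by simp [hC]) (by simp [hX])

theorem apply_aeval_X_add_C {b : k[X]} (hb : IsAdditivePoly b) {q : A}
    (hq : β q + aeval X (b.comp c) = C q) :
    translationExtension β c (aeval X b + C q) = C (aeval X b + C q) := by
  have map_comp : (aeval (X : A[X]) (b.comp c)).map C = aeval (X : A[X][X]) (b.comp c) :=
    map_aeval_X CAlgHom _
  calc translationExtension β c (aeval X b + C q)
      = aeval (C X + aeval X c) b + (β q).map C := by
        rw [map_add, ← aeval_algHom_apply, apply_X, apply_C]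
    _ = aeval (C X) b + (β q + aeval X (b.comp c)).map C := by
        rw [hb.aeval_add, Polynomial.map_add, map_comp, aeval_comp, add_assoc,
          add_comm (aeval (aeval X c) b)]
    _ = C (aeval X b + C q) := by
        rw [hq, aeval_C_eq_C_aeval, map_C, C_add]

end CommSemiring

theorem isGaCoaction {k A : Type*} [CommSemiring k] [CommRing A] [Algebra k A]
    {β : A →ₐ[k] A[X]} (hβ : IsGaCoaction β) {c : k[X]} (hc : IsAdditivePoly c) :
    IsGaCoaction (translationExtension β c) := by
  refine isGaCoaction_of_C_of_X (fun a ↦ ?_) ?_ (fun a ↦ ?_) ?_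
  · rw [apply_C, ← C_0, eval_map_apply, hβ.1]
  · calc eval 0 (translationExtension β c X)
        = X + aeval 0 c := by
          rw [apply_X, eval_add, eval_C, aeval_X_left_eq_map, eval_map_algebraMap]
      _ = X := by rw [hc.aeval_zero, add_zero]
  · have hcomp : (translationExtension β c).toRingHom.comp C =
        (mapRingHom C).comp β.toRingHom := RingHom.ext (apply_C β c)
    rw [apply_C, coaddSubst_map, hβ.2, map_map, map_map, hcomp]
  · calc coaddSubst (translationExtension β c X)
        = C (C X) + (aeval (C X) c + aeval X c) := by
          rw [apply_X, coaddSubst_add, coaddSubst_C, coaddSubst_aeval_X, hc.aeval_add]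
      _ = C (translationExtension β c X) + aeval X c := by
          rw [apply_X, C_add, aeval_C_eq_C_aeval, add_assoc]
      _ = (translationExtension β c X).map (translationExtension β c).toRingHom := by
          rw [apply_X, Polynomial.map_add, map_C, map_aeval_X, AlgHom.toRingHom_eq_coe,
            RingHom.coe_coe, apply_X]

end translationExtension

theorem apply_mk'_of_apply_eq_C_add_mul_C {A S : Type*} [CommSemiring A] [CommSemiring S]
    [Algebra A S] {M : Submonoid A} [IsLocalization M S] {β : A →+* A[X]} {βS : S →+* S[X]}
    (hext : ∀ a, βS (algebraMap A S a) = (β a).map (algebraMap A S))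
    {g : A} {h : M} {p : A[X]} (hinv : β h = C (h : A)) (hpair : β g = C g + p * C (h : A)) :
    βS (IsLocalization.mk' S g h) =
      C (IsLocalization.mk' S g h) + p.map (algebraMap A S) := by
  have hunit : IsUnit (C (algebraMap A S h)) := (IsLocalization.map_units S h).map C
  have hmul := IsLocalization.mk'_spec S g h
  apply hunit.mul_right_cancel
  calc βS (IsLocalization.mk' S g h) * C (algebraMap A S h)
      = βS (algebraMap A S g) := by rw [← hmul, map_mul, hext h, hinv, map_C]
    _ = C (algebraMap A S g) + p.map (algebraMap A S) * C (algebraMap A S h) := by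
      simp [hext, hpair]
    _ = (C (IsLocalization.mk' S g h) + p.map (algebraMap A S)) * C (algebraMap A S h) := by
      rw [add_mul, ← C_mul, hmul]

theorem stmt16_general {k A : Type*} [CommRing k] [CommRing A] [Algebra k A] {M : Submonoid A}
    (β : A →ₐ[k] A[X]) (b : k[X]) (hb : IsAdditivePoly b) (g : A) (h : M)
    (hinv : β h = C (h : A))
    (hpair : β g = C g + b.map (algebraMap k A) * C (h : A))
    (S : Type*) [CommRing S] [Algebra A S] [Algebra k S] [IsScalarTower k A S]
    [IsLocalization M S]
    (βS : S →ₐ[k] S[X]) (hβS : IsGaCoaction βS)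
    (hext : ∀ a : A, βS (algebraMap A S a) = (β a).map (algebraMap A S))
    (ψ : S[X] →ₐ[k] S[X][X])
    (hψC : ∀ x : S, ψ (C x) = (βS x).map C)
    (hψX : ψ X = C X - X) :
    IsGaCoaction ψ ∧
      ψ (b.map (algebraMap k S) + C (IsLocalization.mk' S g h)) =
        C (b.map (algebraMap k S) + C (IsLocalization.mk' S g h)) := by
  obtain rfl : ψ = translationExtension βS (-X) :=
    translationExtension.eq_of_apply_C_of_apply_X hψC (by simp [hψX, sub_eq_add_neg])
  refine ⟨translationExtension.isGaCoaction hβS isAdditivePoly_neg_X, ?_⟩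
  have hquot : βS (IsLocalization.mk' S g h) = C (IsLocalization.mk' S g h) + aeval X b := by
    have := apply_mk'_of_apply_eq_C_add_mul_C (β := β.toRingHom) (βS := βS.toRingHom)
      hext hinv hpair
    rwa [map_map, ← IsScalarTower.algebraMap_eq, ← aeval_X_left_eq_map] at this
  rw [← aeval_X_left_eq_map]
  apply translationExtension.apply_aeval_X_add_C hb
  rw [hquot, aeval_comp, map_neg, aeval_X, hb.aeval_neg, add_neg_cancel_right]

/-- given a `b(t)`-pair `(g,h)` with `h ≠ 0`, the map
`ψ : A_h[s] → A_h[s][t]` agreeing with `β_h` on `A_h` and with `ψ(s) = s − t`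
is a 𝔾ₐ-coaction on `A_h[s]`, and `b(s) + g/h` is `ψ`-invariant.
Here `A_h = S`, the variable `s` is the variable of `Polynomial S`, and `t` is
the (outer) coaction variable. -/
theorem stmt16 {k : Type*} [Field k]
    {A : Type*} [CommRing A] [IsDomain A] [Algebra k A]
    (β : A →ₐ[k] Polynomial A) (hβ : IsGaCoaction β)
    (b : Polynomial k) (hb : IsAdditivePoly b) (hb0 : b ≠ 0)
    (g h : A) (hh0 : h ≠ 0)
    (hinv : β h = Polynomial.C h)
    (hpair : β g = Polynomial.C g + b.map (algebraMap k A) * Polynomial.C h)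
    (S : Type*) [CommRing S] [Algebra A S] [Algebra k S] [IsScalarTower k A S]
    [IsLocalization.Away h S]
    (βS : S →ₐ[k] Polynomial S) (hβS : IsGaCoaction βS)
    (hext : ∀ a : A, βS (algebraMap A S a) = (β a).map (algebraMap A S))
    (ψ : Polynomial S →ₐ[k] Polynomial (Polynomial S))
    (hψC : ∀ x : S, ψ (Polynomial.C x) =
      (βS x).map (Polynomial.C : S →+* Polynomial S))
    (hψX : ψ Polynomial.X = Polynomial.C Polynomial.X - Polynomial.X) :
    IsGaCoaction ψ ∧
    ψ (b.map (algebraMap k S) +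
        Polynomial.C (IsLocalization.mk' S g ⟨h, Submonoid.mem_powers h⟩)) =
      Polynomial.C (b.map (algebraMap k S) +
        Polynomial.C (IsLocalization.mk' S g ⟨h, Submonoid.mem_powers h⟩)) :=
  stmt16_general β b hb g ⟨h, Submonoid.mem_powers h⟩ hinv hpair S βS hβS hext ψ hψC hψX
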